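/- Let d ≥ 2. There exist ε_0 ∈ (0,1), functions C_1 : [1,∞] × [1,∞] → (0,∞) and C_2 : [1,∞] → (0,∞), and linear operators S_{R,ε} : ℝ^{∂D_R} → ℝ^{∂D_R} for ε ∈ (0,ε_0) and R ∈ ℕ, such that for all s ∈ [1,∞], r ∈ [s,∞], R ∈ ℕ, u : ∂D_R → ℝ, and ε ∈ (0,ε_0) (convention 1/∞ = 0): (i) ⦀S_{R,ε}u⦀_{r, ∂D_R} ≤ C_1(s,r) ε^{−(d−1)(1/s − 1/r)} ⦀u⦀_{s, ∂D_R}; (ii) ⦀∇̄(S_{R,ε}u)⦀_{r, E_R^{tan}} ≤ C_1(s,r) ε^{−(d−1)(1/s − 1/r)} ⦀∇̄u⦀_{s, E_R^{tan}}; (iii) ⦀u − S_{R,ε}u⦀_{s, ∂D_R} ≤ C_2(s) ε R ⦀∇̄u⦀_{s, E_R^{tan}}. -/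

import Mathlib

open MeasureTheory Filter
open scoped ENNReal Classical

noncomputable section

/-- Points of the lattice `ℤ^d`. -/
abbrev Zd (d : ℕ) := Fin d → ℤ

/-- The `i`-th standard unit vector of `ℤ^d`. -/
def unitVec {d : ℕ} (i : Fin d) : Zd d := fun j => if j = i then 1 else 0

/-- Environments: a positive conductance for every (unoriented nearest-neighbour) edge,
where the edge `{x, x + e i}` is encoded by the pair `(x, i)`. -/
abbrev Env (d : ℕ) := ((Fin d → ℤ) × Fin d) → {r : ℝ // 0 < r}

/-- The conductance of the edge `{x, x + e i}` in the environment `ω`, as a real number. -/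
def cval {d : ℕ} (ω : Env d) (x : Zd d) (i : Fin d) : ℝ := (ω (x, i)).1

/-- Nearest-neighbour adjacency on `ℤ^d`. -/
def Adj {d : ℕ} (x y : Zd d) : Prop :=
  ∃ i : Fin d, y = x + unitVec i ∨ x = y + unitVec i

/-- The conductance `ω_{xy}` between two nearest neighbours `x ∼ y` (and `0` otherwise). -/
def econd {d : ℕ} (ω : Env d) (x y : Zd d) : ℝ :=
  ∑ i : Fin d, ((if y = x + unitVec i then cval ω x i else 0)
    + (if x = y + unitVec i then cval ω y i else 0))

/-- Discrete gradient `(∇_i u)(x) = u(x+e_i) - u(x)`. -/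
def dGrad {d : ℕ} (i : Fin d) (f : Zd d → ℝ) (x : Zd d) : ℝ :=
  f (x + unitVec i) - f x

/-- Discrete backward gradient `(∇_i^* u)(x) = u(x-e_i) - u(x)`. -/
def dGradStar {d : ℕ} (i : Fin d) (f : Zd d → ℝ) (x : Zd d) : ℝ :=
  f (x - unitVec i) - f x

/-- Discrete divergence `(∇^* ⬝ F)(x) = ∑ i, (F_i(x-e_i) - F_i(x))`. -/
def divStar {d : ℕ} (F : Zd d → Fin d → ℝ) (x : Zd d) : ℝ :=
  ∑ i : Fin d, (F (x - unitVec i) i - F x i)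

/-- Discrete Laplacian `Δu = -∑ i, ∇_i^* ∇_i u`. -/
def lap {d : ℕ} (f : Zd d → ℝ) (x : Zd d) : ℝ :=
  - ∑ i : Fin d, dGradStar i (dGrad i f) x

/-- The open discrete box `D_R = {x : |x|_∞ < R}`. -/
def boxD (d R : ℕ) : Finset (Zd d) :=
  Fintype.piFinset fun _ => Finset.Ioo (-(R : ℤ)) (R : ℤ)

/-- The closed discrete box `D̄_R = {x : |x|_∞ ≤ R}`. -/
def boxC (d R : ℕ) : Finset (Zd d) :=
  Fintype.piFinset fun _ => Finset.Icc (-(R : ℤ)) (R : ℤ)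

/-- The discrete boundary `∂D_R = {x : |x|_∞ = R}`. -/
def bdry (d R : ℕ) : Finset (Zd d) := boxC d R \ boxD d R

/-- The reduced boundary `∂̃D_R` of points of `∂D_R` having a neighbour in `D_R`. -/
def tbdry (d R : ℕ) : Finset (Zd d) :=
  (bdry d R).filter fun x => ∃ y ∈ boxD d R, Adj x y

/-- The oriented edge set `E_R = {(x,y) : x ∼ y, |x+y|_∞ < 2R}`. -/
def ER (d R : ℕ) : Finset (Zd d × Zd d) :=
  ((boxC d R) ×ˢ (boxC d R)).filter fun e =>
    Adj e.1 e.2 ∧ ∀ i, |e.1 i + e.2 i| < 2 * (R : ℤ)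

/-- The normal edges `E_R^{nor} = {(x,y) : x ∈ D_R, y ∈ ∂D_R, x ∼ y}`. -/
def Enor (d R : ℕ) : Finset (Zd d × Zd d) :=
  ((boxD d R) ×ˢ (bdry d R)).filter fun e => Adj e.1 e.2

/-- The tangential edges `E_R^{tan} = {(x,y) : x, y ∈ ∂D_R, x ∼ y}`. -/
def Etan (d R : ℕ) : Finset (Zd d × Zd d) :=
  ((bdry d R) ×ˢ (bdry d R)).filter fun e => Adj e.1 e.2

/-- Normalized `ℓ^r` norm `⦀u⦀_{r,A}` on a finite set. -/
def avNorm {V : Type*} (r : ℝ) (A : Finset V) (u : V → ℝ) : ℝ :=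
  ((∑ x ∈ A, |u x| ^ r) / (A.card : ℝ)) ^ (1 / r)

/-- Sup norm `⦀u⦀_{∞,A}` on a finite set. -/
def supNorm {V : Type*} (A : Finset V) (u : V → ℝ) : ℝ :=
  ⨆ x ∈ A, |u x|

/-- Normalized `ℓ^r` norm for an extended exponent `r ∈ [1,∞]`. -/
def avNormE {V : Type*} (r : ℝ≥0∞) (A : Finset V) (u : V → ℝ) : ℝ :=
  if r = ∞ then supNorm A u else avNorm r.toReal A u

/-- The exponent `2p/(p-1)`, with the convention that it equals `2` for `p = ∞`. -/
def dualExp (p : ℝ≥0∞) : ℝ :=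
  if p = ∞ then 2 else 2 * p.toReal / (p.toReal - 1)

/-- The exponent `2p/(p+1)`, with the convention that it equals `2` for `p = ∞`. -/
def coExp (p : ℝ≥0∞) : ℝ :=
  if p = ∞ then 2 else 2 * p.toReal / (p.toReal + 1)

/-- Euclidean norm on `ℝ^d`. -/
def vecNorm {d : ℕ} (v : Fin d → ℝ) : ℝ := Real.sqrt (∑ i, v i ^ 2)

/-- The translation `τ_a` acting on environments. -/
def shiftEnv {d : ℕ} (a : Zd d) (ω : Env d) : Env d := fun e => ω (e.1 + a, e.2)

/-- Stationarity of a measure on environments. -/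
def Stationary {d : ℕ} (P : Measure (Env d)) : Prop :=
  ∀ a : Zd d, MeasurePreserving (shiftEnv a) P P

/-- Ergodicity of a measure on environments w.r.t. the translations. -/
def ErgodicEnv {d : ℕ} (P : Measure (Env d)) : Prop :=
  ∀ A : Set (Env d), MeasurableSet A → (∀ a : Zd d, shiftEnv a ⁻¹' A = A) →
    P A = 0 ∨ P A = 1

/-- Stationary (`Stat_P`) random fields. -/
def StatP {d : ℕ} {E : Type*} [MeasurableSpace E] (P : Measure (Env d))
    (f : Env d → Zd d → E) : Prop :=
  Measurable (Function.uncurry f) ∧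
    ∀ᵐ ω ∂P, ∀ x : Zd d, f ω x = f (shiftEnv x ω) 0

/-- The horizontal derivative `D_i` on functions of the environment. -/
def Dop {d : ℕ} (i : Fin d) (ζ : Env d → ℝ) : Env d → ℝ :=
  fun ω => ζ (shiftEnv (unitVec i) ω) - ζ ω

/-- The horizontal derivative `D_i^*` on functions of the environment. -/
def DopStar {d : ℕ} (i : Fin d) (ζ : Env d → ℝ) : Env d → ℝ :=
  fun ω => ζ (shiftEnv (-(unitVec i)) ω) - ζ ω

/-- The reflection of `ℤ^d` flipping the `j`-th coordinate. -/
def reflPt {d : ℕ} (j : Fin d) (x : Zd d) : Zd d := fun k => if k = j then -x k else x k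

/-- The reflection `ρ_j` acting on environments. -/
def reflEnv {d : ℕ} (j : Fin d) (ω : Env d) : Env d :=
  fun e => ω (if e.2 = j then reflPt j e.1 - unitVec j else reflPt j e.1, e.2)

open scoped BigOperators

/-!
Let `L = ⌊ε R⌋`, so that `3 L ≤ R` for `ε < 1 / 3`, and let `S u x` be the average of `u` over the
points `T (x + v)`, `|v|_∞ ≤ L`, where `T` retracts a neighbourhood of `∂D_R` onto `∂D_R`, is
Lipschitz with constant `3`, and makes every map `x ↦ T (x + v)` at most `3 ^ d`-to-one. The Schur
test bounds `S` from `L^s` to `L^s`. A point has at most `3 ^ d (2 L + 1)` preimages under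
`v ↦ T (x + v)`, so the kernel of `S` has height `O(L^{-(d-1)})`, which gives the gain from `L^s`
to `L^r`.

For the gradient estimates, points of `∂D_R` at distance at most `K` are joined by tangential edges
inside the cube of radius `K` around either of them. Hence an increment of `u` along a step of
length at most `3` is at most the sum `localGrad` of `|∇̄u|` over the nearby edges. This bounds
`∇̄(S u)` by `S (localGrad u)`, and `u - S u` by `L` times an average of `localGrad u ∘ T`, upon
moving from `x` to `x + v` in `L` unit steps.
-/

section AveragedNorms

variable {V : Type*} {A : Finset V} {u : V → ℝ} {p c : ℝ}

lemma supNorm_nonneg (A : Finset V) (u : V → ℝ) : 0 ≤ supNorm A u :=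
  Real.iSup_nonneg fun _ => Real.iSup_nonneg fun _ => abs_nonneg _

lemma supNorm_le (hc : 0 ≤ c) (h : ∀ x ∈ A, |u x| ≤ c) : supNorm A u ≤ c :=
  Real.iSup_le (fun x => Real.iSup_le (h x) hc) hc

lemma abs_le_supNorm {x : V} (hx : x ∈ A) : |u x| ≤ supNorm A u := by
  have hbdd : BddAbove (Set.range fun y => ⨆ _ : y ∈ A, |u y|) := by
    refine ⟨∑ y ∈ A, |u y|, ?_⟩
    rintro _ ⟨y, rfl⟩
    exact Real.iSup_le (fun hy => Finset.single_le_sum (f := fun y => |u y|)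
      (fun _ _ => abs_nonneg _) hy)
      (Finset.sum_nonneg fun _ _ => abs_nonneg _)
  calc |u x| = ⨆ _ : x ∈ A, |u x| := (ciSup_pos (f := fun _ => |u x|) hx).symm
    _ ≤ supNorm A u := le_ciSup hbdd x

lemma avNorm_nonneg (p : ℝ) (A : Finset V) (u : V → ℝ) : 0 ≤ avNorm p A u := by
  unfold avNorm; positivity

lemma avNormE_nonneg (r : ℝ≥0∞) (A : Finset V) (u : V → ℝ) : 0 ≤ avNormE r A u := by
  unfold avNormE
  split_ifs
  exacts [supNorm_nonneg A u, avNorm_nonneg _ A u]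

lemma avNorm_rpow (hp : 0 < p) (A : Finset V) (u : V → ℝ) :
    avNorm p A u ^ p = (∑ x ∈ A, |u x| ^ p) / A.card := by
  rw [avNorm, one_div, Real.rpow_inv_rpow (by positivity) hp.ne']

lemma avNorm_le_iff (hp : 0 < p) (hc : 0 ≤ c) :
    avNorm p A u ≤ c ↔ ∑ x ∈ A, |u x| ^ p ≤ A.card * c ^ p := by
  rw [avNorm, one_div, Real.rpow_inv_le_iff_of_pos (by positivity) hc hp]
  rcases A.eq_empty_or_nonempty with rfl | hA
  · simpa using Real.rpow_nonneg hc p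
  · rw [div_le_iff₀' (by exact_mod_cast hA.card_pos)]

lemma toReal_pos_of_one_le {s : ℝ≥0∞} (hs : 1 ≤ s) (hs' : s ≠ ∞) : 0 < s.toReal :=
  ENNReal.toReal_pos (one_pos.trans_le hs).ne' hs'

/-- Interpolation between the `L^s` bound `hnorm` and the pointwise bound `hsup`. -/
lemma avNormE_le_mul_rpow_of_abs_le {s r : ℝ≥0∞} {Q : ℝ} (hs : 1 ≤ s) (hsr : s ≤ r)
    (hc : 0 ≤ c) (hQ : 0 < Q) (hnorm : avNormE s A u ≤ c)
    (hsup : ∀ x ∈ A, |u x| ≤ c * Q ^ (1 / s).toReal) :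
    avNormE r A u ≤ c * Q ^ ((1 / s).toReal - (1 / r).toReal) := by
  by_cases hr : r = ∞
  · simpa [avNormE, hr] using supNorm_le (by positivity) hsup
  have hs' : s ≠ ∞ := ne_top_of_le_ne_top hr hsr
  have hs0 := toReal_pos_of_one_le hs hs'
  have hr0 := toReal_pos_of_one_le (hs.trans hsr) hr
  have hsr' : 0 ≤ r.toReal - s.toReal := sub_nonneg.2 (ENNReal.toReal_mono hr hsr)
  simp only [avNormE, hs', hr, if_false, one_div, ENNReal.toReal_inv] at hnorm hsup ⊢
  rw [avNorm_le_iff hs0 hc] at hnorm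
  rw [avNorm_le_iff hr0 (by positivity)]
  have hexp : (c * Q ^ s.toReal⁻¹) ^ (r.toReal - s.toReal) * c ^ s.toReal
      = (c * Q ^ (s.toReal⁻¹ - r.toReal⁻¹)) ^ r.toReal := by
    rw [Real.mul_rpow hc (by positivity), Real.mul_rpow hc (by positivity), mul_right_comm,
      ← Real.rpow_add_of_nonneg hc hsr' hs0.le, sub_add_cancel, ← Real.rpow_mul hQ.le,
      ← Real.rpow_mul hQ.le]
    congr 2
    field_simp
  calc ∑ x ∈ A, |u x| ^ r.toReal
      = ∑ x ∈ A, |u x| ^ (r.toReal - s.toReal) * |u x| ^ s.toReal :=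
        Finset.sum_congr rfl fun x _ => by
          rw [← Real.rpow_add_of_nonneg (abs_nonneg _) hsr' hs0.le, sub_add_cancel]
    _ ≤ ∑ x ∈ A, (c * Q ^ s.toReal⁻¹) ^ (r.toReal - s.toReal) * |u x| ^ s.toReal := by
        gcongr with x hx
        exact hsup x hx
    _ ≤ (c * Q ^ s.toReal⁻¹) ^ (r.toReal - s.toReal) * (A.card * c ^ s.toReal) := by
        rw [← Finset.mul_sum]
        gcongr
    _ = A.card * (c * Q ^ (s.toReal⁻¹ - r.toReal⁻¹)) ^ r.toReal := by
        rw [← hexp]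
        ring

end AveragedNorms

section SchurTest

variable {V W : Type*} {A : Finset V} {B : Finset W} {k : V → W → ℝ} {M p Q : ℝ}
  {f : V → ℝ} {g : W → ℝ} {s r : ℝ≥0∞}

/-- A kernel with which the Schur test bounds, for every exponent, the averaged norm of `f` on `A`
by `M` times that of `g` on `B` whenever `|f a| ≤ ∑ b ∈ B, k a b * |g b|`. The column bound is
multiplied through by `B.card`, so that it makes sense when `A` or `B` is empty. -/
structure IsSchurKernel (A : Finset V) (B : Finset W) (k : V → W → ℝ) (M : ℝ) : Prop where
  nonneg : ∀ a b, 0 ≤ k a b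
  row_le : ∀ a ∈ A, ∑ b ∈ B, k a b ≤ M
  col_le : ∀ b ∈ B, B.card * ∑ a ∈ A, k a b ≤ M * A.card

namespace IsSchurKernel

lemma const_mul (hk : IsSchurKernel A B k M) {c : ℝ} (hc : 0 ≤ c) :
    IsSchurKernel A B (fun a b => c * k a b) (c * M) where
  nonneg a b := mul_nonneg hc (hk.nonneg a b)
  row_le a ha := by
    rw [← Finset.mul_sum]
    exact mul_le_mul_of_nonneg_left (hk.row_le a ha) hc
  col_le b hb := by
    rw [← Finset.mul_sum, mul_left_comm, mul_assoc]
    exact mul_le_mul_of_nonneg_left (hk.col_le b hb) hc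

lemma sum_mul_le_supNorm (hk : IsSchurKernel A B k M) {a : V} (ha : a ∈ A) :
    ∑ b ∈ B, k a b * |g b| ≤ M * supNorm B g :=
  calc ∑ b ∈ B, k a b * |g b| ≤ ∑ b ∈ B, k a b * supNorm B g := by
        gcongr with b hb
        exacts [hk.nonneg a b, abs_le_supNorm hb]
    _ ≤ M * supNorm B g := by
        rw [← Finset.sum_mul]
        exact mul_le_mul_of_nonneg_right (hk.row_le a ha) (supNorm_nonneg B g)

lemma rpow_sum_mul_le (hk : IsSchurKernel A B k M) (hp : 1 ≤ p) {a : V} (ha : a ∈ A) :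
    (∑ b ∈ B, k a b * |g b|) ^ p ≤ M ^ (p - 1) * ∑ b ∈ B, k a b * |g b| ^ p := by
  have hp0 : 0 < p := one_pos.trans_le hp
  have hw : 0 ≤ ∑ b ∈ B, k a b := Finset.sum_nonneg fun b _ => hk.nonneg a b
  have hwg : 0 ≤ ∑ b ∈ B, k a b * |g b| ^ p :=
    Finset.sum_nonneg fun b _ => mul_nonneg (hk.nonneg a b) (by positivity)
  calc (∑ b ∈ B, k a b * |g b|) ^ p
      ≤ ((∑ b ∈ B, k a b) ^ (1 - p⁻¹) * (∑ b ∈ B, k a b * |g b| ^ p) ^ p⁻¹) ^ p := by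
        gcongr
        · exact Finset.sum_nonneg fun b _ => mul_nonneg (hk.nonneg a b) (abs_nonneg _)
        · exact Real.inner_le_weight_mul_Lp_of_nonneg B hp _ _ (hk.nonneg a) fun _ => abs_nonneg _
    _ = (∑ b ∈ B, k a b) ^ (p - 1) * ∑ b ∈ B, k a b * |g b| ^ p := by
        rw [Real.mul_rpow (by positivity) (by positivity), Real.rpow_inv_rpow hwg hp0.ne',
          ← Real.rpow_mul hw, sub_mul, one_mul, inv_mul_cancel₀ hp0.ne']
    _ ≤ M ^ (p - 1) * ∑ b ∈ B, k a b * |g b| ^ p := by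
        gcongr
        exact hk.row_le a ha

lemma avNorm_le (hk : IsSchurKernel A B k M) (hM : 0 ≤ M) (hp : 1 ≤ p)
    (hf : ∀ a ∈ A, |f a| ≤ ∑ b ∈ B, k a b * |g b|) :
    avNorm p A f ≤ M * avNorm p B g := by
  have hp0 : 0 < p := one_pos.trans_le hp
  rw [avNorm_le_iff hp0 (mul_nonneg hM (avNorm_nonneg p B g)),
    Real.mul_rpow hM (avNorm_nonneg p B g), avNorm_rpow hp0]
  have hcol : ∀ b ∈ B, ∑ a ∈ A, k a b ≤ M * A.card / B.card := fun b hb => by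
    rw [le_div_iff₀' (by exact_mod_cast Finset.card_pos.2 ⟨b, hb⟩)]
    exact hk.col_le b hb
  have hMp : M ^ p = M ^ (p - 1) * M := by
    rw [← Real.rpow_add_one' hM (by linarith), sub_add_cancel]
  calc ∑ a ∈ A, |f a| ^ p
      ≤ ∑ a ∈ A, M ^ (p - 1) * ∑ b ∈ B, k a b * |g b| ^ p := by
        refine Finset.sum_le_sum fun a ha => ?_
        exact (Real.rpow_le_rpow (abs_nonneg _) (hf a ha) hp0.le).trans (hk.rpow_sum_mul_le hp ha)
    _ = M ^ (p - 1) * ∑ b ∈ B, (∑ a ∈ A, k a b) * |g b| ^ p := by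
        rw [← Finset.mul_sum, Finset.sum_comm]
        simp only [Finset.sum_mul]
    _ ≤ M ^ (p - 1) * ∑ b ∈ B, M * A.card / B.card * |g b| ^ p := by
        gcongr with b hb
        exact hcol b hb
    _ = A.card * (M ^ p * ((∑ b ∈ B, |g b| ^ p) / B.card)) := by
        rw [← Finset.mul_sum, hMp]
        ring

lemma avNormE_le (hk : IsSchurKernel A B k M) (hM : 0 ≤ M) (hs : 1 ≤ s)
    (hf : ∀ a ∈ A, |f a| ≤ ∑ b ∈ B, k a b * |g b|) :
    avNormE s A f ≤ M * avNormE s B g := by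
  by_cases hs' : s = ∞
  · simp only [avNormE, hs', if_true]
    exact supNorm_le (mul_nonneg hM (supNorm_nonneg B g)) fun a ha =>
      (hf a ha).trans (hk.sum_mul_le_supNorm ha)
  · simp only [avNormE, hs', if_false]
    exact hk.avNorm_le hM (by simpa using ENNReal.toReal_mono hs' hs) hf

lemma sum_mul_le_mul_avNormE (hk : IsSchurKernel A B k M) (hM : 0 ≤ M) (hQ : 0 ≤ Q)
    (hs : 1 ≤ s) {a : V} (ha : a ∈ A) (hle : ∀ b ∈ B, B.card * k a b ≤ M * Q) :
    ∑ b ∈ B, k a b * |g b| ≤ M * avNormE s B g * Q ^ (1 / s).toReal := by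
  by_cases hs' : s = ∞
  · simpa [avNormE, hs'] using hk.sum_mul_le_supNorm ha
  have hp0 := toReal_pos_of_one_le hs hs'
  have hp : 1 ≤ s.toReal := by simpa using ENNReal.toReal_mono hs' hs
  simp only [avNormE, hs', if_false, one_div, ENNReal.toReal_inv]
  generalize s.toReal = p at hp0 hp ⊢
  have hN := avNorm_nonneg p B g
  rw [← Real.rpow_le_rpow_iff
    (Finset.sum_nonneg fun b _ => mul_nonneg (hk.nonneg a b) (abs_nonneg _)) (by positivity) hp0,
    Real.mul_rpow (by positivity) (by positivity), Real.mul_rpow hM hN, avNorm_rpow hp0,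
    Real.rpow_inv_rpow hQ hp0.ne']
  have hle' : ∀ b ∈ B, k a b ≤ M * Q / B.card := fun b hb => by
    rw [le_div_iff₀' (by exact_mod_cast Finset.card_pos.2 ⟨b, hb⟩)]
    exact hle b hb
  have hMp : M ^ p = M ^ (p - 1) * M := by
    rw [← Real.rpow_add_one' hM (by linarith), sub_add_cancel]
  calc (∑ b ∈ B, k a b * |g b|) ^ p ≤ M ^ (p - 1) * ∑ b ∈ B, k a b * |g b| ^ p :=
        hk.rpow_sum_mul_le hp ha
    _ ≤ M ^ (p - 1) * ∑ b ∈ B, M * Q / B.card * |g b| ^ p := by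
        gcongr with b hb
        exact hle' b hb
    _ = M ^ p * ((∑ b ∈ B, |g b| ^ p) / B.card) * Q := by
        rw [← Finset.mul_sum, hMp]
        ring

lemma avNormE_le_mul_rpow (hk : IsSchurKernel A B k M) (hM : 0 ≤ M) (hQ : 0 < Q) (hs : 1 ≤ s)
    (hsr : s ≤ r) (hle : ∀ a ∈ A, ∀ b ∈ B, B.card * k a b ≤ M * Q)
    (hf : ∀ a ∈ A, |f a| ≤ ∑ b ∈ B, k a b * |g b|) :
    avNormE r A f ≤ M * Q ^ ((1 / s).toReal - (1 / r).toReal) * avNormE s B g := by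
  rw [mul_right_comm]
  exact avNormE_le_mul_rpow_of_abs_le hs hsr (mul_nonneg hM (avNormE_nonneg s B g)) hQ
    (hk.avNormE_le hM hs hf) fun a ha =>
      (hf a ha).trans (hk.sum_mul_le_mul_avNormE hM hQ.le hs ha (hle a ha))

end IsSchurKernel

end SchurTest

section AverageAlongMaps

variable {ι V : Type*} [DecidableEq V] {I : Finset ι} {A : Finset V} {τ : ι → V → V}
  {M Q c : ℝ} {f g : V → ℝ} {s r : ℝ≥0∞}

/-- The kernel of the averaging operator `g ↦ 𝔼 i ∈ I, g (τ i ·)`, that is, the proportion of the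
maps `τ i` that send `a` to `b`. -/
def mapKernel (I : Finset ι) (τ : ι → V → V) (a b : V) : ℝ :=
  𝔼 i ∈ I, if τ i a = b then 1 else 0

lemma sum_mapKernel_mul {a : V} (hτ : ∀ i ∈ I, τ i a ∈ A) (h : V → ℝ) :
    ∑ b ∈ A, mapKernel I τ a b * h b = 𝔼 i ∈ I, h (τ i a) := by
  simp only [mapKernel, Finset.expect_mul, ite_mul, one_mul, zero_mul]
  rw [← Finset.expect_sum_comm]
  exact Finset.expect_congr rfl fun i hi => by rw [Finset.sum_ite_eq, if_pos (hτ i hi)]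

lemma isSchurKernel_mapKernel (hM : 1 ≤ M) (hτ : ∀ i ∈ I, ∀ a ∈ A, τ i a ∈ A)
    (hfib : ∀ i ∈ I, ∀ b ∈ A, ((A.filter fun a => τ i a = b).card : ℝ) ≤ M) :
    IsSchurKernel A A (mapKernel I τ) M where
  nonneg a b := Finset.expect_nonneg fun i _ => by split_ifs <;> norm_num
  row_le a ha := by
    have h := sum_mapKernel_mul (fun i hi => hτ i hi a ha) 1
    simp only [Pi.one_apply, mul_one] at h
    rw [h]
    rcases I.eq_empty_or_nonempty with rfl | hI
    · simpa using zero_le_one.trans hM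
    · rwa [Finset.expect_const hI]
  col_le b hb := by
    simp only [mapKernel]
    rw [← Finset.expect_sum_comm, mul_comm]
    simp only [Finset.sum_boole]
    gcongr
    rcases I.eq_empty_or_nonempty with rfl | hI
    · simpa using zero_le_one.trans hM
    · exact Finset.expect_le hI fun i hi => hfib i hi b hb

lemma avNormE_le_of_abs_le_expect (hs : 1 ≤ s) (hM : 1 ≤ M) (hc : 0 ≤ c)
    (hτ : ∀ i ∈ I, ∀ a ∈ A, τ i a ∈ A)
    (hfib : ∀ i ∈ I, ∀ b ∈ A, ((A.filter fun a => τ i a = b).card : ℝ) ≤ M)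
    (hf : ∀ a ∈ A, |f a| ≤ c * 𝔼 i ∈ I, |g (τ i a)|) :
    avNormE s A f ≤ c * M * avNormE s A g := by
  refine ((isSchurKernel_mapKernel hM hτ hfib).const_mul hc).avNormE_le (by positivity) hs
    fun a ha => ?_
  simpa only [mul_assoc, ← Finset.mul_sum,
    sum_mapKernel_mul (fun i hi => hτ i hi a ha) fun b => |g b|] using hf a ha

lemma avNormE_le_mul_rpow_of_abs_le_expect (hs : 1 ≤ s) (hsr : s ≤ r) (hM : 1 ≤ M) (hQ : 0 < Q)
    (hτ : ∀ i ∈ I, ∀ a ∈ A, τ i a ∈ A)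
    (hfib : ∀ i ∈ I, ∀ b ∈ A, ((A.filter fun a => τ i a = b).card : ℝ) ≤ M)
    (hspread : ∀ a ∈ A, ∀ b ∈ A,
      (A.card * (I.filter fun i => τ i a = b).card : ℝ) ≤ M * Q * I.card)
    (hf : ∀ a ∈ A, |f a| ≤ 𝔼 i ∈ I, |g (τ i a)|) :
    avNormE r A f ≤ M * Q ^ ((1 / s).toReal - (1 / r).toReal) * avNormE s A g := by
  refine (isSchurKernel_mapKernel hM hτ hfib).avNormE_le_mul_rpow (by positivity) hQ hs hsr
    (fun a ha b hb => ?_) fun a ha => ?_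
  · rw [mapKernel, Finset.expect_eq_sum_div_card, Finset.sum_boole, ← mul_div_assoc]
    exact div_le_of_le_mul₀ (by positivity) (by positivity) (hspread a ha b hb)
  · rw [sum_mapKernel_mul (fun i hi => hτ i hi a ha) fun b => |g b|]
    exact hf a ha

end AverageAlongMaps

section LatticeGeometry

variable {d K R : ℕ} {x y : Zd d}

/-- The cube of side length `2 * K` centred at `y`, i.e. the closed ball of radius `K` for the
maximum norm. -/
def cube (K : ℕ) (y : Zd d) : Finset (Zd d) :=
  Finset.Icc (y - fun _ => (K : ℤ)) (y + fun _ => (K : ℤ))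

lemma mem_cube : x ∈ cube K y ↔ ∀ i, (x i - y i).natAbs ≤ K := by
  simp only [cube, Finset.mem_Icc, Pi.le_def, ← forall_and, Pi.sub_apply, Pi.add_apply]
  exact forall_congr' fun i => by omega

lemma mem_cube_zero : x ∈ cube K (0 : Zd d) ↔ ∀ i, (x i).natAbs ≤ K := by
  simp [mem_cube]

lemma mem_cube_comm : x ∈ cube K y ↔ y ∈ cube K x := by
  simp only [mem_cube]
  exact forall_congr' fun i => by omega

lemma zero_mem_cube (K : ℕ) : (0 : Zd d) ∈ cube K 0 := by simp [mem_cube_zero]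

lemma card_cube (K : ℕ) (y : Zd d) : (cube K y).card = (2 * K + 1) ^ d := by
  have h (i : Fin d) : (y i + K + 1 - (y i - K)).toNat = 2 * K + 1 := by omega
  simp [cube, Pi.card_Icc, h]

lemma card_le_of_pairwise_mem_cube {s : Finset (Zd d)} (h : ∀ x ∈ s, ∀ y ∈ s, x ∈ cube K y) :
    s.card ≤ (2 * K + 1) ^ d := by
  rcases s.eq_empty_or_nonempty with rfl | ⟨y, hy⟩
  · simp
  · exact (Finset.card_le_card fun x hx => h x hx y hy).trans_eq (card_cube K y)

lemma mem_boxC : x ∈ boxC d R ↔ ∀ i, (x i).natAbs ≤ R := by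
  simp only [boxC, Fintype.mem_piFinset, Finset.mem_Icc]
  exact forall_congr' fun i => by omega

lemma mem_boxD : x ∈ boxD d R ↔ ∀ i, (x i).natAbs < R := by
  simp only [boxD, Fintype.mem_piFinset, Finset.mem_Ioo]
  exact forall_congr' fun i => by omega

lemma mem_bdry : x ∈ bdry d R ↔ (∀ i, (x i).natAbs ≤ R) ∧ ∃ i, (x i).natAbs = R := by
  simp only [bdry, Finset.mem_sdiff, mem_boxC, mem_boxD, not_forall, not_lt]
  exact and_congr_right fun h => exists_congr fun i => (h i).ge_iff_eq

lemma card_bdry_le (d R : ℕ) : (bdry d R).card ≤ 2 * d * (2 * R + 1) ^ (d - 1) := by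
  have hsub : bdry d R ⊆ (Finset.univ : Finset (Fin d)).biUnion fun i =>
      Fintype.piFinset fun j => if j = i then {-(R : ℤ), (R : ℤ)} else Finset.Icc (-(R : ℤ)) R := by
    intro x hx
    obtain ⟨hle, i, hi⟩ := mem_bdry.1 hx
    refine Finset.mem_biUnion.2 ⟨i, Finset.mem_univ _, Fintype.mem_piFinset.2 fun j => ?_⟩
    have hj := hle j
    split_ifs with hji
    · subst hji
      rw [Finset.mem_insert, Finset.mem_singleton]
      omega
    · exact Finset.mem_Icc.2 (by omega)
  have hface (i : Fin d) : (Fintype.piFinset fun j => if j = i then {-(R : ℤ), (R : ℤ)}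
      else Finset.Icc (-(R : ℤ)) R).card ≤ 2 * (2 * R + 1) ^ (d - 1) := by
    rw [Fintype.card_piFinset, Fintype.prod_eq_mul_prod_compl i, if_pos rfl]
    refine Nat.mul_le_mul Finset.card_le_two (le_of_eq ?_)
    have hside (j) (hj : j ∈ ({i}ᶜ : Finset (Fin d))) :
        (if j = i then {-(R : ℤ), (R : ℤ)} else Finset.Icc (-(R : ℤ)) R).card = 2 * R + 1 := by
      rw [if_neg (by simpa using hj), Int.card_Icc]
      omega
    rw [Finset.prod_congr rfl hside, Finset.prod_const]
    simp [Finset.card_compl]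
  calc (bdry d R).card ≤ _ := Finset.card_le_card hsub
    _ ≤ (Finset.univ : Finset (Fin d)).card * (2 * (2 * R + 1) ^ (d - 1)) :=
        Finset.card_biUnion_le_card_mul _ _ _ fun i _ => hface i
    _ = 2 * d * (2 * R + 1) ^ (d - 1) := by
        rw [Finset.card_univ, Fintype.card_fin]
        ring

end LatticeGeometry

section Retraction

variable {d K L R : ℕ} {x x' v z z' : Zd d}

/-- The maximum norm `|z|_∞` on `ℤ^d`, as a natural number. -/
def supNatAbs (z : Zd d) : ℕ := Finset.univ.sup fun i => (z i).natAbs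

lemma natAbs_le_supNatAbs (z : Zd d) (i : Fin d) : (z i).natAbs ≤ supNatAbs z :=
  Finset.le_sup (f := fun i => (z i).natAbs) (Finset.mem_univ i)

lemma supNatAbs_le_iff {n : ℕ} : supNatAbs z ≤ n ↔ ∀ i, (z i).natAbs ≤ n := by
  simp [supNatAbs]

lemma exists_natAbs_eq_supNatAbs [NeZero d] (z : Zd d) : ∃ i, (z i).natAbs = supNatAbs z := by
  obtain ⟨i, -, hi⟩ :=
    Finset.exists_mem_eq_sup Finset.univ Finset.univ_nonempty fun i => (z i).natAbs
  exact ⟨i, hi.symm⟩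

lemma supNatAbs_eq_of_mem_bdry (hx : x ∈ bdry d R) : supNatAbs x = R := by
  obtain ⟨hle, i, hi⟩ := mem_bdry.1 hx
  exact (supNatAbs_le_iff.2 hle).antisymm (hi ▸ natAbs_le_supNatAbs x i)

lemma supNatAbs_le_add_of_mem_cube (h : z' ∈ cube K z) : supNatAbs z' ≤ supNatAbs z + K := by
  refine supNatAbs_le_iff.2 fun i => ?_
  have hi := mem_cube.1 h i
  have hz := natAbs_le_supNatAbs z i
  omega

lemma natAbs_supNatAbs_sub_le (h : z' ∈ cube K z) :
    ((supNatAbs z' : ℤ) - supNatAbs z).natAbs ≤ K := by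
  have h₁ := supNatAbs_le_add_of_mem_cube h
  have h₂ := supNatAbs_le_add_of_mem_cube (mem_cube_comm.1 h)
  omega

lemma add_mem_cube (hv : v ∈ cube K 0) : x + v ∈ cube K x := by
  simpa [mem_cube] using hv

lemma natAbs_supNatAbs_add_sub_le (hx : x ∈ bdry d R) (hv : v ∈ cube L 0) :
    ((supNatAbs (x + v) : ℤ) - R).natAbs ≤ L :=
  supNatAbs_eq_of_mem_bdry hx ▸ natAbs_supNatAbs_sub_le (add_mem_cube hv)

/-- The integer `t` moved towards `0` by the offset `δ` (away from `0` if `δ < 0`), where the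
offset is first clamped to `[-|t| / 2, |t| / 2]`. The clamping makes `shrink` Lipschitz in both
variables across `t = 0`. -/
def shrink (δ t : ℤ) : ℤ :=
  if 0 ≤ t then t - max (-(t / 2)) (min δ (t / 2)) else t + max (-(-t / 2)) (min δ (-t / 2))

lemma shrink_zero (t : ℤ) : shrink 0 t = t := by
  unfold shrink
  omega

lemma natAbs_shrink {δ t : ℤ} (h : 2 * δ.natAbs ≤ t.natAbs) :
    ((shrink δ t).natAbs : ℤ) = t.natAbs - δ := by
  unfold shrink
  omega

lemma natAbs_shrink_le {m : ℕ} {t : ℤ} (hm : 3 * ((m : ℤ) - R).natAbs ≤ R) (ht : t.natAbs ≤ m) :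
    (shrink (m - R) t).natAbs ≤ R := by
  unfold shrink
  omega

lemma natAbs_shrink_sub_shrink_le {δ δ' t t' : ℤ} (hδ : (δ' - δ).natAbs ≤ 1)
    (ht : (t' - t).natAbs ≤ 1) : (shrink δ' t' - shrink δ t).natAbs ≤ 3 := by
  unfold shrink
  omega

lemma natAbs_sub_le_one_of_shrink_eq {δ t t' : ℤ} (h : shrink δ t = shrink δ t') :
    (t - t').natAbs ≤ 1 := by
  unfold shrink at h
  omega

lemma offset_le_of_shrink_add_eq {δ δ' t t' v : ℤ} (hL : 3 * L ≤ R) (hδ : δ.natAbs ≤ L)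
    (hδ' : δ'.natAbs ≤ L) (ht : t.natAbs = R) (ht' : t'.natAbs ≤ R) (hv : v.natAbs ≤ L)
    (h : shrink δ (t + v) = shrink δ' (t' + v)) : δ' ≤ δ := by
  unfold shrink at h
  omega

/-- A retraction of a neighbourhood of `∂D_R` onto `∂D_R`: every coordinate is moved towards `0` by
`|z|_∞ - R`, up to the clamping in `shrink`. -/
def retract (R : ℕ) (z : Zd d) : Zd d := fun i => shrink (supNatAbs z - R) (z i)

lemma retract_mem_bdry [NeZero d] (hz : 3 * ((supNatAbs z : ℤ) - R).natAbs ≤ R) :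
    retract R z ∈ bdry d R := by
  obtain ⟨i, hi⟩ := exists_natAbs_eq_supNatAbs z
  refine mem_bdry.2 ⟨fun j => natAbs_shrink_le hz (natAbs_le_supNatAbs z j), i, ?_⟩
  have h := natAbs_shrink (δ := supNatAbs z - R) (t := z i) (by omega)
  rw [retract]
  omega

lemma retract_add_mem_bdry [NeZero d] (hL : 3 * L ≤ R) (hx : x ∈ bdry d R) (hv : v ∈ cube L 0) :
    retract R (x + v) ∈ bdry d R :=
  retract_mem_bdry (by have := natAbs_supNatAbs_add_sub_le hx hv; omega)

lemma retract_eq_self (hx : x ∈ bdry d R) : retract R x = x := by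
  ext i
  rw [retract, supNatAbs_eq_of_mem_bdry hx, sub_self, shrink_zero]

lemma retract_mem_cube (h : z' ∈ cube 1 z) : retract R z' ∈ cube 3 (retract R z) := by
  have hsup := natAbs_supNatAbs_sub_le h
  exact mem_cube.2 fun i => natAbs_shrink_sub_shrink_le (by omega) (mem_cube.1 h i)

lemma supNatAbs_add_le_of_retract_eq (hL : 3 * L ≤ R) (hx : x ∈ bdry d R) (hx' : x' ∈ bdry d R)
    (hv : v ∈ cube L 0) (h : retract R (x + v) = retract R (x' + v)) :
    supNatAbs (x' + v) ≤ supNatAbs (x + v) := by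
  obtain ⟨-, i, hi⟩ := mem_bdry.1 hx
  have hoffset := offset_le_of_shrink_add_eq hL (natAbs_supNatAbs_add_sub_le hx hv)
    (natAbs_supNatAbs_add_sub_le hx' hv) hi ((mem_bdry.1 hx').1 i) (mem_cube_zero.1 hv i)
    (congrFun h i)
  omega

lemma mem_cube_one_of_retract_eq (hsup : supNatAbs z = supNatAbs z')
    (h : retract R z = retract R z') : z ∈ cube 1 z' := by
  refine mem_cube.2 fun i => natAbs_sub_le_one_of_shrink_eq (δ := supNatAbs z - R) ?_
  simpa only [retract, ← hsup] using congrFun h i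

lemma card_filter_bdry_retract_add_eq_le (hL : 3 * L ≤ R) (hv : v ∈ cube L 0) (y : Zd d) :
    ((bdry d R).filter fun x => retract R (x + v) = y).card ≤ 3 ^ d := by
  refine card_le_of_pairwise_mem_cube (K := 1) fun x hxy x' hxy' => ?_
  obtain ⟨hx, rfl⟩ := Finset.mem_filter.1 hxy
  obtain ⟨hx', h⟩ := Finset.mem_filter.1 hxy'
  have hsup : supNatAbs (x + v) = supNatAbs (x' + v) :=
    (supNatAbs_add_le_of_retract_eq hL hx' hx hv h).antisymm
      (supNatAbs_add_le_of_retract_eq hL hx hx' hv h.symm)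
  simpa [mem_cube] using mem_cube_one_of_retract_eq hsup h.symm

lemma card_filter_cube_retract_add_eq_le (L : ℕ) (hx : x ∈ bdry d R) (y : Zd d) :
    ((cube L 0).filter fun v => retract R (x + v) = y).card ≤ 3 ^ d * (2 * L + 1) := by
  set s := (cube L (0 : Zd d)).filter fun v => retract R (x + v) = y
  have hradius : s.image (fun v => (supNatAbs (x + v) : ℤ)) ⊆ Finset.Icc (R - L : ℤ) (R + L) := by
    refine Finset.image_subset_iff.2 fun v hv => Finset.mem_Icc.2 ?_
    have := natAbs_supNatAbs_add_sub_le hx (Finset.mem_filter.1 hv).1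
    omega
  have hfibre (m : ℤ) : (s.filter fun v => (supNatAbs (x + v) : ℤ) = m).card ≤ 3 ^ d := by
    refine card_le_of_pairwise_mem_cube (K := 1) fun v hv v' hv' => ?_
    simp only [s, Finset.mem_filter] at hv hv'
    have hsup : supNatAbs (x + v) = supNatAbs (x + v') := by omega
    simpa [mem_cube] using mem_cube_one_of_retract_eq hsup (hv.1.2.trans hv'.1.2.symm)
  calc s.card ≤ 3 ^ d * (s.image fun v => (supNatAbs (x + v) : ℤ)).card :=
        Finset.card_le_mul_card_image s _ fun m _ => hfibre m
    _ ≤ 3 ^ d * (Finset.Icc (R - L : ℤ) (R + L)).card := by gcongr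
    _ = 3 ^ d * (2 * L + 1) := by
        rw [Int.card_Icc]
        congr 1
        omega

end Retraction

section LocalConnectivity

variable {d K R : ℕ} {a b x y : Zd d}

lemma adj_update {j : Fin d} {t : ℤ} (h : (t - x j).natAbs = 1) :
    Adj x (Function.update x j t) := by
  refine ⟨j, ?_⟩
  rcases (by omega : t = x j + 1 ∨ x j = t + 1) with ht | ht
  · refine Or.inl (funext fun i => ?_)
    rcases eq_or_ne i j with rfl | hij <;> simp_all [unitVec]
  · refine Or.inr (funext fun i => ?_)
    rcases eq_or_ne i j with rfl | hij <;> simp_all [unitVec]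

lemma Adj.symm (h : Adj x y) : Adj y x :=
  h.imp fun _ => Or.symm

lemma Adj.ne (h : Adj x y) : x ≠ y := by
  rintro rfl
  obtain ⟨i, h | h⟩ := h <;> simpa [unitVec] using congrFun h i

lemma Adj.mem_cube (h : Adj x y) : y ∈ cube 1 x := by
  refine _root_.mem_cube.2 fun j => ?_
  obtain ⟨i, rfl | rfl⟩ := h <;> simp only [Pi.add_apply, unitVec] <;> split_ifs <;> omega

/-- The nearest-neighbour graph on the points of `A`; the points outside `A` are isolated. -/
def latticeGraphOn (A : Set (Zd d)) : SimpleGraph (Zd d) where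
  Adj x y := x ∈ A ∧ y ∈ A ∧ Adj x y
  symm := ⟨fun _ _ h => ⟨h.2.1, h.1, h.2.2.symm⟩⟩
  loopless := ⟨fun _ h => h.2.2.ne rfl⟩

lemma latticeGraphOn_adj {A : Set (Zd d)} :
    (latticeGraphOn A).Adj x y ↔ x ∈ A ∧ y ∈ A ∧ Adj x y :=
  Iff.rfl

lemma mem_uIcc_iff {c : Zd d} : c ∈ Set.uIcc a b ↔ ∀ i, c i ∈ Set.uIcc (a i) (b i) := by
  rw [← Set.pi_univ_uIcc, Set.mem_univ_pi]

lemma reachable_of_uIcc_subset {A : Set (Zd d)} (h : Set.uIcc a b ⊆ A) :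
    (latticeGraphOn A).Reachable a b := by
  induction hn : ∑ i, (a i - b i).natAbs using Nat.strong_induction_on generalizing a with
  | _ n ih =>
  rcases eq_or_ne a b with rfl | hab
  · rfl
  obtain ⟨j, hj⟩ := Function.ne_iff.1 hab
  obtain ⟨t, ht, htb, hlt⟩ : ∃ t : ℤ, (t - a j).natAbs = 1 ∧ t ∈ Set.uIcc (a j) (b j) ∧
      (t - b j).natAbs < (a j - b j).natAbs := by
    simp only [Set.mem_uIcc]
    rcases hj.lt_or_gt with hj | hj
    exacts [⟨a j + 1, by omega⟩, ⟨a j - 1, by omega⟩]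
  have hmem : Function.update a j t ∈ Set.uIcc a b := mem_uIcc_iff.2 fun i => by
    rcases eq_or_ne i j with rfl | hij <;> simp [*]
  have hdecr : ∑ i, (Function.update a j t i - b i).natAbs < n := by
    rw [← hn]
    refine Finset.sum_lt_sum (fun i _ => ?_) ⟨j, Finset.mem_univ j, by simpa using hlt⟩
    rcases eq_or_ne i j with rfl | hij
    exacts [by simpa using hlt.le, by simp [hij]]
  have hstep : (latticeGraphOn A).Adj a (Function.update a j t) :=
    latticeGraphOn_adj.2 ⟨h Set.left_mem_uIcc, h hmem, adj_update ht⟩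
  exact hstep.reachable.trans
    (ih _ hdecr ((Set.uIcc_subset_uIcc hmem Set.right_mem_uIcc).trans h) rfl)

lemma reachable_of_mem_face {i : Fin d} (ha : a ∈ bdry d R ∩ cube K x)
    (hb : b ∈ bdry d R ∩ cube K x) (hi : (a i).natAbs = R) (hab : a i = b i) :
    (latticeGraphOn (bdry d R ∩ cube K x : Finset (Zd d))).Reachable a b := by
  simp only [Finset.mem_inter, mem_bdry, mem_cube] at ha hb
  refine reachable_of_uIcc_subset fun c hc => ?_
  simp only [mem_uIcc_iff, Set.mem_uIcc] at hc
  simp only [Finset.coe_inter, Set.mem_inter_iff, Finset.mem_coe, mem_bdry, mem_cube]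
  refine ⟨⟨fun k => ?_, i, ?_⟩, fun k => ?_⟩
  · have := ha.1.1 k; have := hb.1.1 k; have := hc k; omega
  · have := hc i; omega
  · have := ha.2 k; have := hb.2 k; have := hc k; omega

lemma update_mem_bdry_inter_cube {i j : Fin d} {t : ℤ} (ha : a ∈ bdry d R ∩ cube K x)
    (hi : (a i).natAbs = R) (hij : i ≠ j) (ht : t.natAbs ≤ R) (htx : (t - x j).natAbs ≤ K) :
    Function.update a j t ∈ bdry d R ∩ cube K x := by
  simp only [Finset.mem_inter, mem_bdry, mem_cube] at ha ⊢
  refine ⟨⟨fun k => ?_, i, by simpa [hij] using hi⟩, fun k => ?_⟩ <;>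
    rcases eq_or_ne k j with rfl | hkj <;> simp [*]

lemma reachable_of_mem_faces {i j : Fin d} (ha : a ∈ bdry d R ∩ cube K x)
    (hb : b ∈ bdry d R ∩ cube K x) (hi : (a i).natAbs = R) (hj : (b j).natAbs = R)
    (hij : i ≠ j) : (latticeGraphOn (bdry d R ∩ cube K x : Finset (Zd d))).Reachable a b := by
  have hc : Function.update a j (b j) ∈ bdry d R ∩ cube K x :=
    update_mem_bdry_inter_cube ha hi hij hj.le (mem_cube.1 (Finset.mem_inter.1 hb).2 j)
  exact (reachable_of_mem_face ha hc hi (by simp [hij])).trans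
    (reachable_of_mem_face (i := j) hc hb (by simpa using hj) (by simp))

lemma exists_ne_of_two_le (hd : 2 ≤ d) (i : Fin d) : ∃ j, i ≠ j :=
  have : Nontrivial (Fin d) := Fin.nontrivial_iff_two_le.2 hd
  (exists_ne i).imp fun _ => Ne.symm

lemma reachable_of_mem_bdry (hd : 2 ≤ d) (hx : x ∈ bdry d R) (hy : y ∈ bdry d R)
    (hxy : y ∈ cube K x) :
    (latticeGraphOn (bdry d R ∩ cube K x : Finset (Zd d))).Reachable x y := by
  have hx' : x ∈ bdry d R ∩ cube K x := Finset.mem_inter.2 ⟨hx, by simp [mem_cube]⟩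
  have hy' : y ∈ bdry d R ∩ cube K x := Finset.mem_inter.2 ⟨hy, hxy⟩
  obtain ⟨hxle, i, hi⟩ := mem_bdry.1 hx
  obtain ⟨-, j, hj⟩ := mem_bdry.1 hy
  rcases ne_or_eq i j with hij | rfl
  · exact reachable_of_mem_faces hx' hy' hi hj hij
  by_cases heq : x i = y i
  · exact reachable_of_mem_face hx' hy' hi heq
  -- On opposite faces `2 * R ≤ K`, so the cube leaves room to pass through a third face.
  obtain ⟨k, hik⟩ := exists_ne_of_two_le hd i
  have hc : Function.update x k (R : ℤ) ∈ bdry d R ∩ cube K x := by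
    have := hxle k
    have := mem_cube.1 hxy i
    exact update_mem_bdry_inter_cube hx' hi hik (by simp) (by omega)
  exact (reachable_of_mem_face hx' hc hi (by simp [hik])).trans
    (reachable_of_mem_faces hc hy' (by simp) hj hik.symm)

lemma abs_sub_le_sum_of_reachable {V : Type*} {G : SimpleGraph V} {E : Finset (V × V)} {a b : V}
    (hE : ∀ a b, G.Adj a b → (a, b) ∈ E) (h : G.Reachable a b) (u : V → ℝ) :
    |u b - u a| ≤ ∑ e ∈ E, |u e.2 - u e.1| := by
  have hwalk : ∀ {a b : V} (p : G.Walk a b),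
      |u b - u a| ≤ ((p.darts.map (·.toProd)).map fun e => |u e.2 - u e.1|).sum := by
    intro a b p
    induction p with
    | nil => simp
    | @cons a c b hac p ih =>
      simp only [SimpleGraph.Walk.darts_cons, List.map_cons, List.sum_cons]
      exact (abs_sub_le _ _ _).trans ((add_le_add_left ih _).trans_eq (add_comm _ _))
  obtain ⟨p, hp⟩ := h.exists_isPath
  have hnodup : (p.darts.map (·.toProd)).Nodup :=
    (SimpleGraph.Walk.darts_nodup_of_support_nodup hp.support_nodup).map
      SimpleGraph.Dart.toProd_injective
  calc |u b - u a| ≤ ((p.darts.map (·.toProd)).map fun e => |u e.2 - u e.1|).sum := hwalk p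
    _ = ∑ e ∈ (p.darts.map (·.toProd)).toFinset, |u e.2 - u e.1| :=
        (List.sum_toFinset _ hnodup).symm
    _ ≤ ∑ e ∈ E, |u e.2 - u e.1| := by
        refine Finset.sum_le_sum_of_subset_of_nonneg (fun e he => ?_) fun _ _ _ => abs_nonneg _
        obtain ⟨dart, -, rfl⟩ := List.mem_map.1 (List.mem_toFinset.1 he)
        exact hE _ _ dart.adj

end LocalConnectivity

section TangentialEdges

variable {d R : ℕ} {s r : ℝ≥0∞} {x y : Zd d}

lemma mem_Etan {e : Zd d × Zd d} :
    e ∈ Etan d R ↔ e.1 ∈ bdry d R ∧ e.2 ∈ bdry d R ∧ Adj e.1 e.2 := by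
  simp [Etan, and_assoc]

lemma pos_of_mem_Etan {e : Zd d × Zd d} (he : e ∈ Etan d R) : 0 < R := by
  obtain ⟨h₁, h₂, hadj⟩ := mem_Etan.1 he
  refine Nat.pos_of_ne_zero fun hR => hadj.ne (funext fun i => ?_)
  have := (mem_bdry.1 h₁).1 i
  have := (mem_bdry.1 h₂).1 i
  omega

lemma card_filter_Etan_le (R : ℕ) (P : Zd d → Prop) [DecidablePred P] :
    ((Etan d R).filter fun e => P e.1).card ≤ 3 ^ d * ((bdry d R).filter P).card := by
  refine Finset.card_le_mul_card_image_of_maps_to (f := Prod.fst) (fun e he => ?_) _ fun x _ => ?_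
  · obtain ⟨he, hP⟩ := Finset.mem_filter.1 he
    exact Finset.mem_filter.2 ⟨(mem_Etan.1 he).1, hP⟩
  rw [← card_cube 1 x]
  refine Finset.card_le_card_of_injOn Prod.snd (fun e he => ?_) fun e he e' he' hsnd => ?_ <;>
    simp only [Finset.mem_filter, Finset.mem_coe] at *
  · obtain ⟨⟨he, -⟩, rfl⟩ := he
    exact (mem_Etan.1 he).2.2.mem_cube
  · exact Prod.ext (he.2.trans he'.2.symm) hsnd

lemma card_Etan_le (d R : ℕ) : (Etan d R).card ≤ 3 ^ d * (bdry d R).card := by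
  simpa using card_filter_Etan_le (d := d) R fun _ => True

lemma exists_mem_Etan (hd : 2 ≤ d) (hR : 0 < R) (hx : x ∈ bdry d R) : ∃ y, (x, y) ∈ Etan d R := by
  obtain ⟨hle, i, hi⟩ := mem_bdry.1 hx
  obtain ⟨j, hij⟩ := exists_ne_of_two_le hd i
  have hj := hle j
  obtain ⟨t, ht, htR⟩ : ∃ t : ℤ, (t - x j).natAbs = 1 ∧ t.natAbs ≤ R := by
    rcases lt_or_ge (x j) 0 with h | h
    exacts [⟨x j + 1, by omega⟩, ⟨x j - 1, by omega⟩]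
  refine ⟨Function.update x j t, mem_Etan.2 ⟨hx, ?_, adj_update ht⟩⟩
  have hx' : x ∈ bdry d R ∩ cube 1 x := Finset.mem_inter.2 ⟨hx, by simp [mem_cube]⟩
  exact (Finset.mem_inter.1 (update_mem_bdry_inter_cube hx' hi hij htR ht.le)).1

lemma card_bdry_le_card_Etan (hd : 2 ≤ d) (hR : 0 < R) : (bdry d R).card ≤ (Etan d R).card := by
  refine Finset.card_le_card_of_surjOn Prod.fst fun x hx => ?_
  obtain ⟨y, hy⟩ := exists_mem_Etan hd hR hx
  exact ⟨(x, y), hy, rfl⟩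

/-- The sum of the tangential gradient of `u` over the edges of `∂D_R` issuing from the cube of
radius `3` around `x`. The radius is the Lipschitz constant of `retract`. -/
def localGrad (R : ℕ) (u : Zd d → ℝ) (x : Zd d) : ℝ :=
  ∑ e ∈ (Etan d R).filter fun e => e.1 ∈ cube 3 x, |u e.2 - u e.1|

lemma localGrad_nonneg (R : ℕ) (u : Zd d → ℝ) (x : Zd d) : 0 ≤ localGrad R u x :=
  Finset.sum_nonneg fun _ _ => abs_nonneg _

lemma abs_sub_le_localGrad (hd : 2 ≤ d) (u : Zd d → ℝ) (hx : x ∈ bdry d R) (hy : y ∈ bdry d R)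
    (hxy : y ∈ cube 3 x) : |u y - u x| ≤ localGrad R u x := by
  refine abs_sub_le_sum_of_reachable (fun a b hab => ?_) (reachable_of_mem_bdry hd hx hy hxy) u
  obtain ⟨ha, hb, hadj⟩ := latticeGraphOn_adj.1 hab
  simp only [Finset.mem_coe, Finset.mem_inter] at ha hb
  exact Finset.mem_filter.2 ⟨mem_Etan.2 ⟨ha.1, hb.1, hadj⟩, ha.2⟩

lemma avNormE_localGrad_le (hs : 1 ≤ s) (u : Zd d → ℝ) :
    avNormE s (bdry d R) (localGrad R u)
      ≤ 21 ^ d * avNormE s (Etan d R) fun e => u e.2 - u e.1 := by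
  have hcube (x : Zd d) : ((bdry d R).filter (· ∈ cube 3 x)).card ≤ 7 ^ d :=
    (Finset.card_le_card fun y hy => (Finset.mem_filter.1 hy).2).trans_eq (card_cube 3 x)
  have hrow (x : Zd d) : ((Etan d R).filter fun e => e.1 ∈ cube 3 x).card ≤ 21 ^ d :=
    calc ((Etan d R).filter fun e => e.1 ∈ cube 3 x).card
        ≤ 3 ^ d * ((bdry d R).filter (· ∈ cube 3 x)).card := card_filter_Etan_le R (· ∈ cube 3 x)
      _ ≤ 3 ^ d * 7 ^ d := Nat.mul_le_mul_left _ (hcube x)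
      _ = 21 ^ d := (mul_pow 3 7 d).symm
  have hcol (e : Zd d × Zd d) :
      (Etan d R).card * ((bdry d R).filter fun x => e.1 ∈ cube 3 x).card
        ≤ 21 ^ d * (bdry d R).card :=
    calc (Etan d R).card * ((bdry d R).filter fun x => e.1 ∈ cube 3 x).card
        ≤ 3 ^ d * (bdry d R).card * 7 ^ d := by
          simp only [mem_cube_comm (x := e.1)]
          exact Nat.mul_le_mul (card_Etan_le d R) (hcube e.1)
      _ = 21 ^ d * (bdry d R).card := by
          rw [mul_right_comm, ← mul_pow]
          norm_num
  have hker : IsSchurKernel (bdry d R) (Etan d R)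
      (fun x e => if e.1 ∈ cube 3 x then (1 : ℝ) else 0) (21 ^ d) := by
    refine ⟨fun x e => by positivity, fun x _ => ?_, fun e _ => ?_⟩ <;> rw [Finset.sum_boole]
    · exact_mod_cast hrow x
    · exact_mod_cast hcol e
  refine hker.avNormE_le (by positivity) hs fun x _ => ?_
  simp only [ite_mul, one_mul, zero_mul]
  rw [abs_of_nonneg (localGrad_nonneg R u x), localGrad, Finset.sum_filter]

lemma card_bdry_mul_card_filter_Etan_le (hd : 2 ≤ d) (x : Zd d) :
    (bdry d R).card * ((Etan d R).filter fun e => e.1 = x).card ≤ 3 ^ d * (Etan d R).card := by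
  rcases (Etan d R).eq_empty_or_nonempty with hE | ⟨e, he⟩
  · simp [hE]
  have hdeg : ((Etan d R).filter fun e => e.1 = x).card ≤ 3 ^ d :=
    calc ((Etan d R).filter fun e => e.1 = x).card
        ≤ 3 ^ d * ((bdry d R).filter (· = x)).card := card_filter_Etan_le R (· = x)
      _ ≤ 3 ^ d * 1 := Nat.mul_le_mul_left _ <| Finset.card_le_one.2 fun y hy z hz =>
          (Finset.mem_filter.1 hy).2.trans (Finset.mem_filter.1 hz).2.symm
      _ = 3 ^ d := mul_one _
  rw [mul_comm]
  exact Nat.mul_le_mul hdeg (card_bdry_le_card_Etan hd (pos_of_mem_Etan he))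

lemma avNormE_Etan_le (hd : 2 ≤ d) (hr : 1 ≤ r) {f : Zd d × Zd d → ℝ} {h : Zd d → ℝ}
    (hf : ∀ e ∈ Etan d R, |f e| ≤ |h e.1|) :
    avNormE r (Etan d R) f ≤ 3 ^ d * avNormE r (bdry d R) h := by
  have hker : IsSchurKernel (Etan d R) (bdry d R)
      (fun e x => if e.1 = x then (1 : ℝ) else 0) (3 ^ d) := by
    refine ⟨fun e x => by positivity, fun e he => ?_, fun x _ => ?_⟩
    · rw [Finset.sum_ite_eq, if_pos (mem_Etan.1 he).1]
      exact one_le_pow₀ (by norm_num)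
    · rw [Finset.sum_boole]
      exact_mod_cast card_bdry_mul_card_filter_Etan_le hd x
  refine hker.avNormE_le (by positivity) hr fun e he => ?_
  simpa only [ite_mul, one_mul, zero_mul, Finset.sum_ite_eq, if_pos (mem_Etan.1 he).1] using hf e he

end TangentialEdges

section SmoothingOperator

variable {d R L : ℕ} {ε : ℝ} {s r : ℝ≥0∞} {x v : Zd d}

/-- The smoothing operator at scale `L` on `∂D_R`: the average of `u` over the retracted translates
`x + v`, `|v|_∞ ≤ L`. At the points of `∂D_R` it only depends on `u` on `∂D_R` if `3 * L ≤ R`. -/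
def smoothOp (d R L : ℕ) : (Zd d → ℝ) →ₗ[ℝ] (Zd d → ℝ) where
  toFun u x := 𝔼 v ∈ cube L (0 : Zd d), u (retract R (x + v))
  map_add' _ _ := funext fun _ => Finset.expect_add_distrib _ _ _
  map_smul' c _ := funext fun _ => (Finset.mul_expect _ _ c).symm

lemma smoothOp_apply (u : Zd d → ℝ) (x : Zd d) :
    smoothOp d R L u x = 𝔼 v ∈ cube L (0 : Zd d), u (retract R (x + v)) :=
  rfl

lemma card_bdry_mul_le (hε : 0 < ε) (hd : d ≠ 0) (hscale : ε * (2 * R + 1) ≤ 3 * (2 * L + 1)) :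
    ((bdry d R).card * (2 * L + 1) : ℝ)
      ≤ 2 * d * 3 ^ d * (ε⁻¹) ^ (d - 1) * (cube L (0 : Zd d)).card := by
  have hR : (2 * R + 1 : ℝ) ≤ 3 * (2 * L + 1) * ε⁻¹ := by
    rwa [← div_eq_mul_inv, le_div_iff₀' hε]
  have hcard : ((bdry d R).card : ℝ) ≤ 2 * d * (2 * R + 1) ^ (d - 1) := by
    exact_mod_cast card_bdry_le d R
  calc ((bdry d R).card * (2 * L + 1) : ℝ)
      ≤ 2 * d * (3 * (2 * L + 1) * ε⁻¹) ^ (d - 1) * (2 * L + 1) := by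
        gcongr
        exact hcard.trans (by gcongr)
    _ = 2 * d * 3 ^ (d - 1) * (ε⁻¹) ^ (d - 1) * (2 * L + 1) ^ d := by
        rw [mul_pow, mul_pow, ← pow_sub_one_mul hd (2 * L + 1 : ℝ)]
        ring
    _ ≤ 2 * d * 3 ^ d * (ε⁻¹) ^ (d - 1) * (cube L (0 : Zd d)).card := by
        rw [card_cube]
        push_cast
        gcongr
        exacts [by norm_num, Nat.sub_le d 1]

lemma avNormE_smoothOp_le [NeZero d] (hs : 1 ≤ s) (hsr : s ≤ r) (hL : 3 * L ≤ R) (hε : 0 < ε)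
    (hscale : ε * (2 * R + 1) ≤ 3 * (2 * L + 1)) (u : Zd d → ℝ) :
    avNormE r (bdry d R) (smoothOp d R L u)
      ≤ 2 * d * 9 ^ d * ε ^ (-(((d : ℝ) - 1) * ((1 / s).toReal - (1 / r).toReal)))
        * avNormE s (bdry d R) u := by
  have hd : (1 : ℝ) ≤ d := by exact_mod_cast NeZero.one_le
  have hM : (3 : ℝ) ^ d ≤ 2 * d * 9 ^ d := by
    calc (3 : ℝ) ^ d ≤ 1 * 9 ^ d := by rw [one_mul]; gcongr; norm_num
      _ ≤ 2 * d * 9 ^ d := by gcongr; linarith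
  have hQ : (ε⁻¹) ^ (d - 1) = ε ^ (-((d : ℝ) - 1)) := by
    rw [Real.rpow_neg hε.le, ← Nat.cast_pred (NeZero.pos d), Real.rpow_natCast, inv_pow]
  rw [← neg_mul, Real.rpow_mul hε.le, ← hQ]
  refine avNormE_le_mul_rpow_of_abs_le_expect (I := cube L 0) (τ := fun v x => retract R (x + v))
    hs hsr ((one_le_pow₀ (by norm_num)).trans hM) (by positivity)
    (fun v hv x hx => retract_add_mem_bdry hL hx hv) (fun v hv y _ => ?_) (fun x hx y _ => ?_)
    fun x _ => Finset.abs_expect_le _ _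
  · refine le_trans ?_ hM
    exact_mod_cast card_filter_bdry_retract_add_eq_le hL hv y
  · have hfib : (((cube L 0).filter fun v => retract R (x + v) = y).card : ℝ)
        ≤ 3 ^ d * (2 * L + 1) := by
      exact_mod_cast card_filter_cube_retract_add_eq_le L hx y
    calc ((bdry d R).card * ((cube L 0).filter fun v => retract R (x + v) = y).card : ℝ)
        ≤ (bdry d R).card * (3 ^ d * (2 * L + 1)) := by gcongr
      _ = 3 ^ d * ((bdry d R).card * (2 * L + 1)) := by ring
      _ ≤ 3 ^ d * (2 * d * 3 ^ d * (ε⁻¹) ^ (d - 1) * (cube L (0 : Zd d)).card) := by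
          refine mul_le_mul_of_nonneg_left ?_ (by positivity)
          exact card_bdry_mul_le hε (NeZero.ne d) hscale
      _ = 2 * d * 9 ^ d * (ε⁻¹) ^ (d - 1) * (cube L (0 : Zd d)).card := by
          rw [show (9 : ℝ) = 3 * 3 by norm_num, mul_pow]
          ring

lemma abs_sub_smoothOp_le_of_mem_Etan (hd : 2 ≤ d) (hL : 3 * L ≤ R) (u : Zd d → ℝ)
    {e : Zd d × Zd d} (he : e ∈ Etan d R) :
    |smoothOp d R L u e.2 - smoothOp d R L u e.1| ≤ smoothOp d R L (localGrad R u) e.1 := by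
  have : NeZero d := ⟨by omega⟩
  obtain ⟨h₁, h₂, hadj⟩ := mem_Etan.1 he
  simp only [smoothOp_apply]
  rw [← Finset.expect_sub_distrib]
  refine (Finset.abs_expect_le _ _).trans (Finset.expect_le_expect fun v hv => ?_)
  refine abs_sub_le_localGrad hd u (retract_add_mem_bdry hL h₁ hv) (retract_add_mem_bdry hL h₂ hv)
    (retract_mem_cube ?_)
  simpa [mem_cube] using mem_cube.1 hadj.mem_cube

lemma avNormE_grad_smoothOp_le (hd : 2 ≤ d) (hs : 1 ≤ s) (hsr : s ≤ r) (hL : 3 * L ≤ R)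
    (hε : 0 < ε) (hscale : ε * (2 * R + 1) ≤ 3 * (2 * L + 1)) (u : Zd d → ℝ) :
    avNormE r (Etan d R) (fun e => smoothOp d R L u e.2 - smoothOp d R L u e.1)
      ≤ 2 * d * 567 ^ d * ε ^ (-(((d : ℝ) - 1) * ((1 / s).toReal - (1 / r).toReal)))
        * avNormE s (Etan d R) fun e => u e.2 - u e.1 := by
  have : NeZero d := ⟨by omega⟩
  set q := ε ^ (-(((d : ℝ) - 1) * ((1 / s).toReal - (1 / r).toReal)))
  have : 0 ≤ q := by positivity
  calc avNormE r (Etan d R) (fun e => smoothOp d R L u e.2 - smoothOp d R L u e.1)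
      ≤ 3 ^ d * avNormE r (bdry d R) (smoothOp d R L (localGrad R u)) :=
        avNormE_Etan_le hd (hs.trans hsr) fun e he =>
          (abs_sub_smoothOp_le_of_mem_Etan hd hL u he).trans (le_abs_self _)
    _ ≤ 3 ^ d * (2 * d * 9 ^ d * q * avNormE s (bdry d R) (localGrad R u)) := by
        gcongr
        exact avNormE_smoothOp_le hs hsr hL hε hscale _
    _ ≤ 3 ^ d * (2 * d * 9 ^ d * q *
          (21 ^ d * avNormE s (Etan d R) fun e => u e.2 - u e.1)) := by
        gcongr
        exact avNormE_localGrad_le hs u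
    _ = 2 * d * 567 ^ d * q * avNormE s (Etan d R) fun e => u e.2 - u e.1 := by
        rw [show (567 : ℝ) = 3 * 9 * 21 by norm_num, mul_pow, mul_pow]
        ring

/-- The point of the cube of radius `t` around `0` nearest to `v`. As `t` runs from `0` to `L`, it
moves from `0` to `v` in steps of maximum norm at most `1`. -/
def truncate (t : ℕ) (v : Zd d) : Zd d := fun i => max (-t) (min t (v i))

lemma truncate_zero (v : Zd d) : truncate 0 v = 0 := by
  ext i
  simp only [truncate, Pi.zero_apply]
  omega

lemma truncate_of_mem_cube (hv : v ∈ cube L 0) : truncate L v = v := by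
  ext i
  have := mem_cube_zero.1 hv i
  simp only [truncate]
  omega

lemma truncate_mem_cube {t : ℕ} (ht : t ≤ L) (v : Zd d) : truncate t v ∈ cube L 0 :=
  mem_cube_zero.2 fun i => by simp only [truncate]; omega

lemma truncate_succ_mem_cube (t : ℕ) (v : Zd d) : truncate (t + 1) v ∈ cube 1 (truncate t v) :=
  mem_cube.2 fun i => by simp only [truncate]; omega

lemma abs_sub_retract_add_le (hd : 2 ≤ d) (hL : 3 * L ≤ R) (u : Zd d → ℝ) (hx : x ∈ bdry d R)
    (hv : v ∈ cube L 0) : |u x - u (retract R (x + v))|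
      ≤ ∑ t ∈ Finset.range L, localGrad R u (retract R (x + truncate t v)) := by
  have : NeZero d := ⟨by omega⟩
  have hmem {t : ℕ} (ht : t ≤ L) : retract R (x + truncate t v) ∈ bdry d R :=
    retract_add_mem_bdry hL hx (truncate_mem_cube ht v)
  have hpath := dist_le_range_sum_dist (fun t => u (retract R (x + truncate t v))) L
  rw [truncate_zero, add_zero, retract_eq_self hx, truncate_of_mem_cube hv] at hpath
  refine hpath.trans (Finset.sum_le_sum fun t ht => ?_)
  rw [Finset.mem_range] at ht
  rw [dist_comm]
  refine abs_sub_le_localGrad hd u (hmem ht.le) (hmem ht) (retract_mem_cube ?_)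
  simpa [mem_cube] using mem_cube.1 (truncate_succ_mem_cube t v)

lemma abs_sub_smoothOp_le (hd : 2 ≤ d) (hL : 3 * L ≤ R) (u : Zd d → ℝ) (hx : x ∈ bdry d R) :
    |u x - smoothOp d R L u x| ≤ L * 𝔼 p ∈ cube L (0 : Zd d) ×ˢ Finset.range L,
      |localGrad R u (retract R (x + truncate p.2 p.1))| := by
  have hne : (cube L (0 : Zd d)).Nonempty := ⟨0, zero_mem_cube L⟩
  calc |u x - smoothOp d R L u x|
      = |𝔼 v ∈ cube L (0 : Zd d), (u x - u (retract R (x + v)))| := by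
        rw [Finset.expect_sub_distrib, Finset.expect_const hne, smoothOp_apply]
    _ ≤ 𝔼 v ∈ cube L (0 : Zd d), |u x - u (retract R (x + v))| := Finset.abs_expect_le _ _
    _ ≤ 𝔼 v ∈ cube L (0 : Zd d),
          ∑ t ∈ Finset.range L, localGrad R u (retract R (x + truncate t v)) :=
        Finset.expect_le_expect fun v hv => abs_sub_retract_add_le hd hL u hx hv
    _ = L * 𝔼 p ∈ cube L (0 : Zd d) ×ˢ Finset.range L,
          |localGrad R u (retract R (x + truncate p.2 p.1))| := by
        simp only [abs_of_nonneg (localGrad_nonneg R u _)]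
        rw [Finset.expect_product, Finset.mul_expect]
        refine Finset.expect_congr rfl fun v _ => ?_
        simpa using (Finset.card_mul_expect (Finset.range L) _).symm

lemma avNormE_sub_smoothOp_le (hd : 2 ≤ d) (hs : 1 ≤ s) (hL : 3 * L ≤ R) (u : Zd d → ℝ) :
    avNormE s (bdry d R) (fun x => u x - smoothOp d R L u x)
      ≤ 63 ^ d * L * avNormE s (Etan d R) fun e => u e.2 - u e.1 := by
  have : NeZero d := ⟨by omega⟩
  have hmem {p : Zd d × ℕ} (hp : p ∈ cube L (0 : Zd d) ×ˢ Finset.range L) :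
      truncate p.2 p.1 ∈ cube L 0 :=
    truncate_mem_cube (Finset.mem_range.1 (Finset.mem_product.1 hp).2).le p.1
  calc avNormE s (bdry d R) (fun x => u x - smoothOp d R L u x)
      ≤ L * 3 ^ d * avNormE s (bdry d R) (localGrad R u) := by
        refine avNormE_le_of_abs_le_expect (I := cube L 0 ×ˢ Finset.range L)
          (τ := fun p x => retract R (x + truncate p.2 p.1)) hs
          (one_le_pow₀ (by norm_num)) L.cast_nonneg
          (fun p hp x hx => retract_add_mem_bdry hL hx (hmem hp)) (fun p hp y _ => ?_)
          fun x hx => abs_sub_smoothOp_le hd hL u hx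
        exact_mod_cast card_filter_bdry_retract_add_eq_le hL (hmem hp) y
    _ ≤ L * 3 ^ d * (21 ^ d * avNormE s (Etan d R) fun e => u e.2 - u e.1) := by
        gcongr
        exact avNormE_localGrad_le hs u
    _ = 63 ^ d * L * avNormE s (Etan d R) fun e => u e.2 - u e.1 := by
        rw [show (63 : ℝ) = 3 * 21 by norm_num, mul_pow]
        ring

end SmoothingOperator

/-- Corollary `a48a`, existence of smoothing operators on discrete boundaries:
there are `ε₀ ∈ (0,1)`, constants `C₁(s,r), C₂(s) > 0` and linear operators
`S_{R,ε} : ℝ^{∂D_R} → ℝ^{∂D_R}` satisfying the three smoothing estimates. -/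
theorem smoothing_operators_exist (d : ℕ) (hd : 2 ≤ d) :
    ∃ ε₀ : ℝ, ε₀ ∈ Set.Ioo (0 : ℝ) 1 ∧
    ∃ (C₁ : ℝ≥0∞ → ℝ≥0∞ → ℝ) (C₂ : ℝ≥0∞ → ℝ)
      (S : ℕ → ℝ → (Zd d → ℝ) →ₗ[ℝ] (Zd d → ℝ)),
      (∀ s r : ℝ≥0∞, 0 < C₁ s r) ∧ (∀ s : ℝ≥0∞, 0 < C₂ s) ∧
      ∀ (s r : ℝ≥0∞), 1 ≤ s → s ≤ r →
        ∀ (R : ℕ) (u : Zd d → ℝ) (ε : ℝ), ε ∈ Set.Ioo (0 : ℝ) ε₀ →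
          avNormE r (bdry d R) (S R ε u)
              ≤ C₁ s r * ε ^ (-(((d : ℝ) - 1) * ((1 / s).toReal - (1 / r).toReal)))
                  * avNormE s (bdry d R) u ∧
          avNormE r (Etan d R) (fun e => S R ε u e.2 - S R ε u e.1)
              ≤ C₁ s r * ε ^ (-(((d : ℝ) - 1) * ((1 / s).toReal - (1 / r).toReal)))
                  * avNormE s (Etan d R) (fun e => u e.2 - u e.1) ∧
          avNormE s (bdry d R) (fun x => u x - S R ε u x)
              ≤ C₂ s * ε * R * avNormE s (Etan d R) (fun e => u e.2 - u e.1) := by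
  have : NeZero d := ⟨by omega⟩
  have : (0 : ℝ) < d := by exact_mod_cast NeZero.pos d
  refine ⟨1 / 3, by norm_num, fun _ _ => 2 * d * 567 ^ d, fun _ => 63 ^ d,
    fun R ε => smoothOp d R ⌊ε * R⌋₊, fun _ _ => by positivity, fun _ => by positivity,
    fun s r hs hsr R u ε ⟨hε, hε₃⟩ => ?_⟩
  have hεR : 0 ≤ ε * R := by positivity
  have hfloor := Nat.floor_le hεR
  have hlt := Nat.lt_floor_add_one (ε * R)
  have hL : 3 * ⌊ε * R⌋₊ ≤ R := by
    have : (3 * ⌊ε * R⌋₊ : ℝ) ≤ R := by nlinarith [R.cast_nonneg (α := ℝ)]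
    exact_mod_cast this
  have hscale : ε * (2 * R + 1) ≤ 3 * (2 * ⌊ε * R⌋₊ + 1) := by linarith
  refine ⟨?_, avNormE_grad_smoothOp_le hd hs hsr hL hε hscale u, ?_⟩
  · refine (avNormE_smoothOp_le hs hsr hL hε hscale u).trans ?_
    beta_reduce
    gcongr
    exacts [avNormE_nonneg s _ u, by norm_num]
  · refine (avNormE_sub_smoothOp_le hd hs hL u).trans ?_
    rw [mul_assoc (63 ^ d : ℝ) ε]
    gcongr
    exact avNormE_nonneg s _ _

end
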